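/- arXiv:1502.05322 — 3 statements merged into one kernel-verified Lean document; each statement's English description precedes it below -/
import Mathlib

section
/- The following identity holds in ℤ[q][[x]]: Σ_{n≥0} M_{1,3}(1+2n, 1) · xⁿ = Σ_{n≥0} xⁿ q^{n(n+1)/2} (−q;q)_n; that is, the generating series A^{1→3}_1(x,q) of level-3 multiplicities in local Weyl modules of odd highest weight equals Ψ(x,q) = Σ_{n≥0} xⁿ q^{n(n+1)/2} (−q;q)_n. -/
open Polynomial Finset

/-- `IsDemazureFlagMult l D` asserts that `D s n` is the family of graded multiplicities
`[D(l,s) : D(l+1,n)]_q ∈ ℤ[q]` (with `q = X`), extended by zero to negative arguments,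
characterized by the recursions of Biswal–Chari–Schneider–Viswanath. -/
def IsDemazureFlagMult (l : ℤ) (D : ℤ → ℤ → Polynomial ℤ) : Prop :=
  (∀ s n : ℤ, (s < 0 ∨ n < 0 ∨ ¬ (2 ∣ (s - n))) → D s n = 0) ∧
  (∀ j k n : ℤ, 0 ≤ j → 0 ≤ k → k ≤ l → 0 ≤ n → n ≤ l →
    D (2*l*j + k) n = if k = n then (X : Polynomial ℤ) ^ (j*(l*j + n)).toNat else 0) ∧
  (∀ j k n : ℤ, 1 ≤ j → 0 ≤ k → k ≤ l → 0 ≤ n → n ≤ l →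
    D (2*l*j - k) n = if k = n then (X : Polynomial ℤ) ^ (j*(l*j - n)).toNat else 0) ∧
  (∀ s n s₁ s₀ : ℤ, l + 1 ≤ n → 1 ≤ s → 2 ∣ (s - n) → 0 ≤ s₁ → 1 ≤ s₀ → s₀ ≤ l →
    s = l * s₁ + s₀ →
    D s n = (X : Polynomial ℤ) ^ (((s - n)/2).toNat) * D (s - l - 1) (n - l - 1)
          + (X : Polynomial ℤ) ^ ((s₀ * s₁).toNat) * D (s - 2*s₀) n)

/-- `IsMultTower DT M` : given the tower of level-`l` flag multiplicities `DT l`,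
`M l m s n` is the graded multiplicity `[D(l,s) : D(m,n)]_q` of level-`m` Demazure
modules in a level-`m` Demazure flag of `D(l,s)`. -/
def IsMultTower (DT : ℤ → ℤ → ℤ → Polynomial ℤ) (M : ℤ → ℤ → ℤ → ℤ → Polynomial ℤ) : Prop :=
  (∀ l s n : ℤ, M l l s n = if s = n ∧ 0 ≤ s then 1 else 0) ∧
  (∀ l m s n : ℤ, l < m → M l m s n = ∑ p ∈ Finset.Icc (0:ℤ) s, DT l s p * M (l+1) m p n)

/-!
In odd weights the level-1 recursion is the `q`-Pascal rule up to a power of `q`, so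
`D₁(2n+1, 2p+1) = q^((n-p)(n+1)) [n choose p]_q`, while `D₂(2p+1, 1) = q^(p(p+1)/2)`. Since
`p(p+1)/2 = p(p-1)/2 + p`, the sum over `p` which defines `M₁,₃(2n+1, 1)` is the `q`-binomial
expansion of `∏_{i<n} (y + x q^i)` at `x = q`, `y = q^(n+1)`. Pulling `q^(i+1)` out of each factor
leaves `q^(n(n+1)/2) (-q; q)_n`.
-/

section QBinomial

variable {R : Type*} [CommSemiring R]

/-- The Gaussian binomial coefficient `[n choose k]_q`, defined by the `q`-Pascal rule so that it
makes sense at every element `q` of a commutative semiring. -/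
def qBinom (q : R) : ℕ → ℕ → R
  | _, 0 => 1
  | 0, _ + 1 => 0
  | n + 1, k + 1 => qBinom q n k + q ^ (k + 1) * qBinom q n (k + 1)

@[simp]
theorem qBinom_zero_right (q : R) (n : ℕ) : qBinom q n 0 = 1 := by
  cases n <;> rfl

@[simp]
theorem qBinom_zero_succ (q : R) (k : ℕ) : qBinom q 0 (k + 1) = 0 := rfl

theorem qBinom_succ_succ (q : R) (n k : ℕ) :
    qBinom q (n + 1) (k + 1) = qBinom q n k + q ^ (k + 1) * qBinom q n (k + 1) := rfl

theorem qBinom_eq_zero_of_lt (q : R) {n k : ℕ} (h : n < k) : qBinom q n k = 0 := by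
  induction n generalizing k with
  | zero => obtain ⟨k, rfl⟩ := Nat.exists_eq_succ_of_ne_zero h.ne'; rfl
  | succ n ih =>
    obtain ⟨k, rfl⟩ := Nat.exists_eq_succ_of_ne_zero (Nat.ne_zero_of_lt h)
    rw [Nat.succ_eq_add_one, qBinom_succ_succ, ih (by lia), ih (by lia), mul_zero, add_zero]

theorem choose_two_succ (n : ℕ) : (n + 1).choose 2 = n.choose 2 + n := by
  rw [Nat.choose_succ_succ' n 1, Nat.choose_one_right, add_comm]

theorem prod_range_add_mul_pow_eq_sum_qBinom (q x y : R) (n : ℕ) :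
    ∏ i ∈ range n, (y + x * q ^ i) =
      ∑ k ∈ range (n + 1), q ^ k.choose 2 * qBinom q n k * x ^ k * y ^ (n - k) := by
  -- Splitting off the factor `i = 0` leaves the same product with `x * q` in place of `x`.
  induction n generalizing x with
  | zero => simp
  | succ n ih =>
    have shift : ∏ i ∈ range n, (y + x * q ^ (i + 1)) =
        ∑ k ∈ range (n + 1), q ^ k.choose 2 * qBinom q n k * (x * q) ^ k * y ^ (n - k) := by
      simpa only [mul_assoc, ← pow_succ'] using ih (x * q)
    have mul_y : y * ∑ k ∈ range (n + 1),
          q ^ k.choose 2 * qBinom q n k * (x * q) ^ k * y ^ (n - k) =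
        ∑ k ∈ range (n + 1), q ^ (k + 1).choose 2 * (q ^ (k + 1) * qBinom q n (k + 1)) *
          x ^ (k + 1) * y ^ (n - k) + y ^ (n + 1) := by
      calc _ = ∑ k ∈ range (n + 2),
            q ^ k.choose 2 * (q ^ k * qBinom q n k) * x ^ k * y ^ (n + 1 - k) := by
            rw [sum_range_succ _ (n + 1), qBinom_eq_zero_of_lt q n.lt_succ_self, mul_sum]
            simp only [mul_zero, zero_mul, add_zero]
            refine sum_congr rfl fun k hk => ?_
            rw [Nat.succ_sub (mem_range_succ_iff.1 hk), pow_succ y, mul_pow]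
            ring
        _ = _ := by
            rw [sum_range_succ']
            simp
    have mul_x : x * ∑ k ∈ range (n + 1),
          q ^ k.choose 2 * qBinom q n k * (x * q) ^ k * y ^ (n - k) =
        ∑ k ∈ range (n + 1), q ^ (k + 1).choose 2 * qBinom q n k *
          x ^ (k + 1) * y ^ (n - k) := by
      rw [mul_sum]
      refine sum_congr rfl fun k _ => ?_
      rw [choose_two_succ]
      ring
    rw [prod_range_succ', shift, pow_zero, mul_one, mul_comm, add_mul, mul_y, mul_x,
      sum_range_succ' _ (n + 1)]
    simp only [qBinom_succ_succ, mul_add, add_mul, sum_add_distrib, Nat.add_sub_add_right,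
      Nat.choose_zero_succ, qBinom_zero_right, pow_zero, mul_one, one_mul, Nat.sub_zero]
    abel

theorem prod_range_pow_add_pow (q : R) (n : ℕ) :
    ∏ i ∈ range n, (q ^ (n + 1) + q ^ (i + 1)) =
      q ^ (n + 1).choose 2 * ∏ i ∈ Icc 1 n, (1 + q ^ i) := by
  have factor : ∀ i ∈ range n, q ^ (n + 1) + q ^ (i + 1) = q ^ (i + 1) * (1 + q ^ (n - i)) := by
    intro i hi
    rw [mul_add, mul_one, ← pow_add, add_comm, show i + 1 + (n - i) = n + 1 by grind]
  have reflect : ∏ i ∈ range n, (1 + q ^ (n - i)) = ∏ i ∈ Icc 1 n, (1 + q ^ i) := by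
    apply prod_nbij' (fun i => n - i) (fun i => n - i) <;> grind
  have triangle : ∑ i ∈ range n, (i + 1) = (n + 1).choose 2 := by
    rw [Nat.choose_two_right, ← sum_range_id, sum_range_succ', add_zero]
  rw [prod_congr rfl factor, prod_mul_distrib, reflect, prod_pow_eq_pow_sum, triangle]

theorem sum_pow_mul_qBinom_mul_pow_choose_two (q : R) (n : ℕ) :
    ∑ p ∈ range (n + 1), q ^ ((n - p) * (n + 1)) * qBinom q n p * q ^ (p + 1).choose 2 =
      q ^ (n + 1).choose 2 * ∏ i ∈ Icc 1 n, (1 + q ^ i) := by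
  calc _ = ∑ p ∈ range (n + 1),
        q ^ p.choose 2 * qBinom q n p * q ^ p * (q ^ (n + 1)) ^ (n - p) := by
        refine sum_congr rfl fun p _ => ?_
        rw [choose_two_succ]
        ring
    _ = ∏ i ∈ range n, (q ^ (n + 1) + q * q ^ i) :=
        (prod_range_add_mul_pow_eq_sum_qBinom q q _ n).symm
    _ = _ := by simp only [← pow_succ', prod_range_pow_add_pow]

end QBinomial

theorem sum_Icc_eq_sum_range_odd {A : Type*} [AddCommMonoid A] (f : ℤ → A)
    (hf : ∀ p, Even p → f p = 0) (n : ℕ) :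
    ∑ p ∈ Icc (0 : ℤ) (2 * n + 1), f p = ∑ p ∈ range (n + 1), f (2 * p + 1) := by
  refine (sum_of_injOn (fun p : ℕ => 2 * (p : ℤ) + 1) ?_ ?_ ?_ fun _ _ => rfl).symm
  · intro a _ b _ hab
    grind
  · intro a ha
    grind
  · intro p hp hp_image
    refine hf p (Int.not_odd_iff_even.1 fun ⟨k, hk⟩ => hp_image ⟨k.toNat, ?_, ?_⟩) <;> grind

namespace IsDemazureFlagMult

variable {D : ℤ → ℤ → ℤ[X]}

theorem eq_zero_of_left_neg {l s n : ℤ} (h : IsDemazureFlagMult l D) (hs : s < 0) : D s n = 0 :=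
  h.1 s n (.inl hs)

theorem eq_zero_of_not_two_dvd {l s n : ℤ} (h : IsDemazureFlagMult l D) (hsn : ¬ 2 ∣ s - n) :
    D s n = 0 :=
  h.1 s n (.inr (.inr hsn))

theorem level_one_odd_one (h : IsDemazureFlagMult 1 D) (n : ℕ) :
    D (2 * n + 1) 1 = X ^ (n * (n + 1)) := by
  have h_col := h.2.1 n 1 1 (by lia) (by lia) (by lia) (by lia) (by lia)
  rw [if_pos rfl, mul_one, one_mul] at h_col
  rw [h_col]
  norm_cast

theorem level_one_recursion (h : IsDemazureFlagMult 1 D) {s n : ℤ} (hs : 1 ≤ s) (hn : 2 ≤ n)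
    (hsn : 2 ∣ s - n) :
    D s n = X ^ ((s - n) / 2).toNat * D (s - 2) (n - 2) + X ^ (s - 1).toNat * D (s - 2) n := by
  have h_rec := h.2.2.2 s n (s - 1) 1 hn hs hsn (by lia) le_rfl le_rfl (by ring)
  rwa [one_mul, mul_one, sub_sub, sub_sub, one_add_one_eq_two] at h_rec

theorem level_one_odd_odd (h : IsDemazureFlagMult 1 D) (n p : ℕ) :
    D (2 * n + 1) (2 * p + 1) = X ^ ((n - p) * (n + 1)) * qBinom X n p := by
  induction n generalizing p with
  | zero =>
    cases p with
    | zero => simpa using h.level_one_odd_one 0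
    | succ p =>
      rw [h.level_one_recursion (by lia) (by lia) (by lia), h.eq_zero_of_left_neg (by lia),
        h.eq_zero_of_left_neg (by lia)]
      simp
  | succ n ih =>
    cases p with
    | zero => simpa using h.level_one_odd_one (n + 1)
    | succ p =>
      have pascal : D (2 * (n + 1 : ℕ) + 1) (2 * (p + 1 : ℕ) + 1) =
          X ^ (n - p) * D (2 * n + 1) (2 * p + 1) +
            X ^ (2 * n + 2) * D (2 * n + 1) (2 * (p + 1 : ℕ) + 1) := by
        rw [h.level_one_recursion (by lia) (by lia) (by lia)]
        congr 3 <;> lia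
      rw [pascal, ih, ih, qBinom_succ_succ]
      rcases lt_or_ge p n with hpn | hnp
      · obtain ⟨d, rfl⟩ := Nat.exists_eq_add_of_lt hpn
        rw [show p + d + 1 - p = d + 1 by lia, show p + d + 1 - (p + 1) = d by lia,
          show p + d + 1 + 1 - (p + 1) = d + 1 by lia]
        ring
      · rw [qBinom_eq_zero_of_lt X (Nat.lt_succ_of_le hnp), Nat.sub_eq_zero_of_le hnp,
          Nat.add_sub_add_right, Nat.sub_eq_zero_of_le hnp]
        ring

theorem level_two_odd_one (h : IsDemazureFlagMult 2 D) (p : ℕ) :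
    D (2 * p + 1) 1 = X ^ (p + 1).choose 2 := by
  obtain ⟨j, rfl | rfl⟩ := p.even_or_odd'
  · have h_col := h.2.1 j 1 1 (by lia) (by lia) (by lia) (by lia) (by lia)
    have exponent : (2 * j + 1).choose 2 = j * (2 * j + 1) := by
      rw [Nat.choose_two_right]; grind
    rw [if_pos rfl] at h_col
    rw [exponent, show 2 * ((2 * j : ℕ) : ℤ) + 1 = 2 * 2 * j + 1 by push_cast; ring, h_col]
    norm_cast
  · have h_col := h.2.2.1 (j + 1) 1 1 (by lia) (by lia) (by lia) (by lia) (by lia)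
    have exponent : (2 * j + 1 + 1).choose 2 = (j + 1) * (2 * j + 1) := by
      rw [Nat.choose_two_right]; grind
    rw [if_pos rfl, show (2 : ℤ) * (j + 1) - 1 = 2 * j + 1 by ring] at h_col
    rw [exponent, show 2 * ((2 * j + 1 : ℕ) : ℤ) + 1 = 2 * 2 * (j + 1) - 1 by push_cast; ring,
      h_col]
    norm_cast

end IsDemazureFlagMult

namespace IsMultTower

variable {DT : ℤ → ℤ → ℤ → ℤ[X]} {M : ℤ → ℤ → ℤ → ℤ → ℤ[X]}

theorem succ_level (hM : IsMultTower DT M) (l : ℤ) {s n : ℤ} (hn : 0 ≤ n) (hns : n ≤ s) :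
    M l (l + 1) s n = DT l s n := by
  rw [hM.2 l (l + 1) s n (by lia), sum_eq_single_of_mem n (mem_Icc.2 ⟨hn, hns⟩)]
  · rw [hM.1, if_pos ⟨rfl, hn⟩, mul_one]
  · intro p _ hpn
    rw [hM.1, if_neg (fun hp => hpn hp.1), mul_zero]

theorem one_three_odd_one (hM : IsMultTower DT M) (h₁ : IsDemazureFlagMult 1 (DT 1))
    (h₂ : IsDemazureFlagMult 2 (DT 2)) (n : ℕ) :
    M 1 3 (2 * n + 1) 1 = X ^ (n + 1).choose 2 * ∏ i ∈ Icc 1 n, (1 + X ^ i) := by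
  calc M 1 3 (2 * n + 1) 1
      = ∑ p ∈ Icc (0 : ℤ) (2 * n + 1), DT 1 (2 * n + 1) p * M 2 3 p 1 :=
        hM.2 1 3 _ _ (by lia)
    _ = ∑ p ∈ range (n + 1), DT 1 (2 * n + 1) (2 * p + 1) * M 2 3 (2 * p + 1) 1 := by
        refine sum_Icc_eq_sum_range_odd _ (fun p hp => ?_) n
        rw [h₁.eq_zero_of_not_two_dvd (by grind), zero_mul]
    _ = ∑ p ∈ range (n + 1), X ^ ((n - p) * (n + 1)) * qBinom X n p * X ^ (p + 1).choose 2 := by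
        refine sum_congr rfl fun p _ => ?_
        have two_three : M 2 3 (2 * p + 1) 1 = DT 2 (2 * p + 1) 1 :=
          hM.succ_level 2 zero_le_one (by lia)
        rw [h₁.level_one_odd_odd, two_three, h₂.level_two_odd_one]
    _ = X ^ (n + 1).choose 2 * ∏ i ∈ Icc 1 n, (1 + X ^ i) :=
        sum_pow_mul_qBinom_mul_pow_choose_two X n

end IsMultTower

/-- **Theorem (`A^{1→3}_1(x,q) = Ψ(x,q)`).** In `ℤ[q][[x]]`:
`Σ_{n≥0} M_{1,3}(1+2n,1)·xⁿ = Σ_{n≥0} xⁿ q^{n(n+1)/2} (−q;q)_n`. -/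
theorem level1_to_level3_weight1_eq_Psi
    (DT : ℤ → ℤ → ℤ → Polynomial ℤ) (M : ℤ → ℤ → ℤ → ℤ → Polynomial ℤ)
    (hDT : ∀ l : ℤ, 1 ≤ l → IsDemazureFlagMult l (DT l)) (hM : IsMultTower DT M) :
    PowerSeries.mk (fun n => M 1 3 (1 + 2*(n:ℤ)) 1) =
      PowerSeries.mk (fun n =>
        (X : Polynomial ℤ)^(n*(n+1)/2) * ∏ i ∈ Finset.Icc 1 n, (1 + (X : Polynomial ℤ)^i)) := by
  ext1 n
  rw [PowerSeries.coeff_mk, PowerSeries.coeff_mk, add_comm (1 : ℤ),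
    hM.one_three_odd_one (hDT 1 le_rfl) (hDT 2 one_le_two), Nat.choose_two_right,
    Nat.add_sub_cancel, mul_comm (n + 1)]
end

section
/- The following two identities hold in ℤ[[q]] (both left-hand sums converge coefficientwise since the order of M_{1,3}(2n+1,1) tends to infinity with n): (a) Σ_{n≥0} M_{1,3}(2n+1, 1)(q) = ψ₁(q); (b) q · Σ_{n≥0} qⁿ · M_{1,3}(2n+1, 1)(q) = ψ₀(q). (These are the specializations A^{1→3}_1(1,q) = ψ₁(q) and A^{1→3}_1(q,q) = ψ₀(q)/q of the generating series of level-3 Demazure flag multiplicities of local Weyl modules.) -/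
open Polynomial Finset

/-- Ramanujan's fifth order mock theta function `ψ₀(q) = Σ_{n≥0} q^{(n+1)(n+2)/2}(−q;q)_n`.
Since the `n`-th term has order `(n+1)(n+2)/2 > n`, its `q^k`-coefficient is the (finite)
sum of the `q^k`-coefficients of the terms with `n ≤ k`. -/
noncomputable def mockPsi0 : PowerSeries ℤ :=
  PowerSeries.mk fun k => ∑ n ∈ Finset.range (k+1),
    ((X : Polynomial ℤ)^((n+1)*(n+2)/2) * ∏ i ∈ Finset.Icc 1 n, (1 + (X : Polynomial ℤ)^i)).coeff k

/-- Ramanujan's fifth order mock theta function `ψ₁(q) = Σ_{n≥0} q^{n(n+1)/2}(−q;q)_n`. -/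
noncomputable def mockPsi1 : PowerSeries ℤ :=
  PowerSeries.mk fun k => ∑ n ∈ Finset.range (k+1),
    ((X : Polynomial ℤ)^(n*(n+1)/2) * ∏ i ∈ Finset.Icc 1 n, (1 + (X : Polynomial ℤ)^i)).coeff k

/-!
At weight `1` the two-step multiplicity is `M₁₃(2a+1, 1) = ∑_b D₁(2a+1, 2b+1) D₂(2b+1, 1)`, and
`D₂(2b+1, 1) = q^{b(b+1)/2}`. The recursion for `D₁` shows that
`F_a(y) = ∑_b D₁(2a+1, 2b+1) q^{b(b+1)/2} y^b` satisfies
`F_{a+1}(y) = q^{a+1} (y + q^{a+1}) F_a(y)`, a form of the `q`-binomial theorem. At `y = 1` it says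
that `M₁₃(2a+1, 1)` is exactly the `a`-th term of `ψ₁`; multiplied by `q^{a+1}` this is the `a`-th
term of `ψ₀`.
-/

theorem succ_mul_succ_div_two (n : ℕ) : (n + 1) * (n + 2) / 2 = n * (n + 1) / 2 + (n + 1) := by
  simpa [mul_comm] using Nat.triangle_succ (n + 1)

theorem sum_Icc_one_eq_sum_odd {A : Type*} [AddCommMonoid A] {f : ℤ → A}
    (hf : ∀ p, Even p → f p = 0) (a : ℕ) :
    ∑ p ∈ Icc (1 : ℤ) (2 * a + 1), f p = ∑ b ∈ range (a + 1), f (2 * b + 1) := by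
  symm
  refine sum_of_injOn (fun b : ℕ => 2 * (b : ℤ) + 1) (fun b _ c _ hbc => ?_) (fun b hb => ?_)
    (fun p hp hp' => hf p ?_) fun _ _ => rfl
  · simpa using hbc
  · simp only [coe_range, Set.mem_Iio, coe_Icc, Set.mem_Icc] at hb ⊢
    omega
  · by_contra hodd
    obtain ⟨b, rfl⟩ := Int.not_even_iff_odd.mp hodd
    rw [mem_Icc] at hp
    exact hp' ⟨b.toNat, by simp only [coe_range, Set.mem_Iio]; omega, by dsimp only; omega⟩

/-- The generating polynomial `F_a(y) = ∑_b D(2a+1, 2b+1) q^{b(b+1)/2} y^b` of the odd row `2a+1`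
of `D`, with the triangular powers of `q` as weights. -/
noncomputable def oddRowPoly (D : ℤ → ℤ → ℤ[X]) (y : ℤ[X]) (a : ℕ) : ℤ[X] :=
  ∑ b ∈ range (a + 1), D (2 * a + 1) (2 * b + 1) * (X ^ (b * (b + 1) / 2) * y ^ b)

namespace IsDemazureFlagMult

variable {l : ℤ} {D : ℤ → ℤ → ℤ[X]}

theorem eq_zero_of_neg_right (h : IsDemazureFlagMult l D) (s : ℤ) {n : ℤ} (hn : n < 0) :
    D s n = 0 :=
  h.1 s n (.inr (.inl hn))

theorem eq_zero_of_not_even_sub (h : IsDemazureFlagMult l D) {s n : ℤ} (hsn : ¬ Even (s - n)) :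
    D s n = 0 :=
  h.1 s n (.inr (.inr (even_iff_two_dvd.not.mp hsn)))

-- The recursion does not determine `D 0 n` for `l < n`; it preserves the parity of an odd `s`,
-- so the descent passes from positive to negative arguments without meeting `0`.
theorem eq_zero_of_lt (h : IsDemazureFlagMult l D) (hl : Odd l) (hl₀ : 0 < l) {s n : ℤ}
    (hs : Odd s) (hsn : s < n) : D s n = 0 := by
  rcases lt_or_ge s 0 with hs₀ | hs₀
  · exact h.1 s n (.inl hs₀)
  by_cases hpar : Even (s - n)
  swap
  · exact h.eq_zero_of_not_even_sub hpar
  have hs₁ : 1 ≤ s := by grind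
  rcases le_or_gt n l with hnl | hnl
  · simpa [hsn.ne] using h.2.1 0 s n le_rfl hs₀ (by omega) (by omega) hnl
  · have hmod := Int.emod_nonneg (s - 1) hl₀.ne'
    have hmod' := Int.emod_lt_of_pos (s - 1) hl₀
    rw [h.2.2.2 s n ((s - 1) / l) ((s - 1) % l + 1) hnl hs₁ hpar.two_dvd
        (Int.ediv_nonneg (by omega) hl₀.le) (by omega) hmod'
        (by linarith [Int.mul_ediv_add_emod (s - 1) l]),
      h.eq_zero_of_lt hl hl₀ (by grind) (by omega), h.eq_zero_of_lt hl hl₀ (by grind) (by omega)]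
    simp
termination_by s.toNat
decreasing_by all_goals omega

theorem apply_two_mul_mul_add (h : IsDemazureFlagMult l D) {j n : ℤ} (hj : 0 ≤ j) (hn : 0 ≤ n)
    (hnl : n ≤ l) {e : ℕ} (he : e = j * (l * j + n)) : D (2 * l * j + n) n = X ^ e := by
  rw [h.2.1 j n n hj hn hnl hn hnl, if_pos rfl, ← he, Int.toNat_natCast]

theorem apply_two_mul_mul_sub (h : IsDemazureFlagMult l D) {j n : ℤ} (hj : 1 ≤ j) (hn : 0 ≤ n)
    (hnl : n ≤ l) {e : ℕ} (he : e = j * (l * j - n)) : D (2 * l * j - n) n = X ^ e := by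
  rw [h.2.2.1 j n n hj hn hnl hn hnl, if_pos rfl, ← he, Int.toNat_natCast]

theorem level_one_apply_odd_one (h : IsDemazureFlagMult 1 D) (a : ℕ) :
    D (2 * a + 1) 1 = X ^ (a * (a + 1)) := by
  rw [← h.apply_two_mul_mul_add (j := a) (by omega) one_pos.le le_rfl (by push_cast; ring), mul_one]

theorem level_two_apply_odd_one (h : IsDemazureFlagMult 2 D) (b : ℕ) :
    D (2 * b + 1) 1 = X ^ (b * (b + 1) / 2) := by
  rcases b.even_or_odd' with ⟨j, rfl | rfl⟩
  · have hexp : 2 * j * (2 * j + 1) / 2 = j * (2 * j + 1) :=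
      Nat.div_eq_of_eq_mul_right two_pos (by ring)
    rw [hexp,
      ← h.apply_two_mul_mul_add (j := j) (by omega) one_pos.le one_le_two (by push_cast; ring)]
    congr 1
    push_cast
    ring
  · have hexp : (2 * j + 1) * (2 * j + 1 + 1) / 2 = (j + 1) * (2 * j + 1) :=
      Nat.div_eq_of_eq_mul_right two_pos (by ring)
    rw [hexp,
      ← h.apply_two_mul_mul_sub (j := j + 1) (by omega) one_pos.le one_le_two (by push_cast; ring)]
    congr 1
    push_cast
    ring

theorem level_one_apply_odd_succ (h : IsDemazureFlagMult 1 D) (a b : ℕ) :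
    D (2 * (a + 1) + 1) (2 * b + 1) =
      X ^ (a + 1 - b) * D (2 * a + 1) (2 * b - 1) +
        X ^ (2 * (a + 1)) * D (2 * a + 1) (2 * b + 1) := by
  rcases b with _ | b
  · have hsucc := h.level_one_apply_odd_one (a + 1)
    push_cast at hsucc
    simp only [Nat.cast_zero, mul_zero, zero_sub, zero_add, hsucc, h.level_one_apply_odd_one,
      h.eq_zero_of_neg_right _ neg_one_lt_zero]
    ring
  · rw [h.2.2.2 _ _ (2 * (a + 1)) 1 (by omega) (by omega) (by omega) (by omega) le_rfl le_rfl
      (by ring)]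
    congr 3 <;> omega

theorem oddRowPoly_succ (h : IsDemazureFlagMult 1 D) (y : ℤ[X]) (a : ℕ) :
    oddRowPoly D y (a + 1) = X ^ (a + 1) * (y + X ^ (a + 1)) * oddRowPoly D y a := by
  have hshift : ∑ b ∈ range (a + 2), X ^ (a + 1 - b) * D (2 * a + 1) (2 * b - 1) *
      (X ^ (b * (b + 1) / 2) * y ^ b) = X ^ (a + 1) * y * oddRowPoly D y a := by
    rw [oddRowPoly, sum_range_succ', mul_sum]
    simp only [Nat.cast_zero, mul_zero, zero_sub, h.eq_zero_of_neg_right _ neg_one_lt_zero,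
      zero_mul, add_zero]
    refine sum_congr rfl fun b hb => ?_
    have hpow : a + 1 = (a + 1 - (b + 1)) + (b + 1) := by grind
    rw [succ_mul_succ_div_two, Nat.cast_succ, show 2 * ((b : ℤ) + 1) - 1 = 2 * b + 1 by ring]
    conv_rhs => rw [hpow]
    ring
  have htop : ∑ b ∈ range (a + 2), D (2 * a + 1) (2 * b + 1) *
      (X ^ (b * (b + 1) / 2) * y ^ b) = oddRowPoly D y a := by
    rw [sum_range_succ, h.eq_zero_of_lt odd_one one_pos (by simp) (by push_cast; omega),
      zero_mul, add_zero, oddRowPoly]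
  calc oddRowPoly D y (a + 1)
      = X ^ (a + 1) * y * oddRowPoly D y a + X ^ (2 * (a + 1)) * oddRowPoly D y a := by
        rw [← hshift, ← htop, mul_sum, ← sum_add_distrib, oddRowPoly]
        refine sum_congr rfl fun b _ => ?_
        rw [Nat.cast_succ, h.level_one_apply_odd_succ]
        ring
    _ = X ^ (a + 1) * (y + X ^ (a + 1)) * oddRowPoly D y a := by ring

theorem oddRowPoly_eq_prod (h : IsDemazureFlagMult 1 D) (y : ℤ[X]) (a : ℕ) :
    oddRowPoly D y a = X ^ (a * (a + 1) / 2) * ∏ i ∈ Icc 1 a, (y + X ^ i) := by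
  induction a with
  | zero => simpa [oddRowPoly] using h.level_one_apply_odd_one 0
  | succ a ih =>
    rw [h.oddRowPoly_succ, ih, prod_Icc_succ_top (by omega), succ_mul_succ_div_two]
    ring

end IsDemazureFlagMult

namespace IsMultTower

variable {DT : ℤ → ℤ → ℤ → ℤ[X]} {M : ℤ → ℤ → ℤ → ℤ → ℤ[X]}

theorem mult_add_one (hM : IsMultTower DT M) (l s n : ℤ) :
    M l (l + 1) s n = if n ∈ Icc 0 s then DT l s n else 0 := by
  rw [hM.2 _ _ _ _ (lt_add_one l), ← sum_ite_eq' _ n fun p => DT l s p]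
  refine sum_congr rfl fun p hp => ?_
  simp [hM.1, (mem_Icc.mp hp).1]

theorem mult_add_two (hM : IsMultTower DT M) (l s : ℤ) {n : ℤ} (hn : 0 ≤ n) :
    M l (l + 2) s n = ∑ p ∈ Icc n s, DT l s p * DT (l + 1) p n := by
  have hfilter : Icc n s = {p ∈ Icc 0 s | n ∈ Icc 0 p} := by
    ext p
    simp only [mem_filter, mem_Icc]
    omega
  rw [hM.2 _ _ _ _ (by omega), hfilter, sum_filter, show l + 2 = l + 1 + 1 by ring]
  simp only [hM.mult_add_one, mul_ite, mul_zero]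

end IsMultTower

section CoefficientwiseSums

variable {R : Type*} [Semiring R] {f : ℕ → R[X]}

theorem finite_support_coeff_of_X_pow_dvd (hf : ∀ n, X ^ n ∣ f n) (k : ℕ) :
    (Function.support fun n => (f n).coeff k).Finite :=
  (Set.finite_Iic k).subset fun _ hn =>
    not_lt.mp fun hkn => hn (X_pow_dvd_iff.mp (hf _) k hkn)

theorem tsum_coeff_of_X_pow_dvd [TopologicalSpace R] (hf : ∀ n, X ^ n ∣ f n) {k m : ℕ}
    (hkm : k < m) : ∑' n, (f n).coeff k = ∑ n ∈ range m, (f n).coeff k :=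
  tsum_eq_sum fun n hn => X_pow_dvd_iff.mp (hf n) k (by rw [mem_range] at hn; omega)

end CoefficientwiseSums

/-- The summand `q^{n(n+1)/2} (−q;q)_n` of `ψ₁`; the corresponding summand of `ψ₀` is
`q^{n+1}` times it. -/
noncomputable def mockPsi1Term (n : ℕ) : ℤ[X] :=
  X ^ (n * (n + 1) / 2) * ∏ i ∈ Icc 1 n, (1 + X ^ i)

theorem X_pow_dvd_mockPsi1Term (n : ℕ) : X ^ n ∣ mockPsi1Term n := by
  refine (pow_dvd_pow X ?_).mul_right _
  rw [Nat.le_div_iff_mul_le two_pos]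
  rcases n with _ | n
  · simp
  · gcongr; omega

theorem mockPsi1_eq_mk_tsum :
    mockPsi1 = PowerSeries.mk fun k => ∑' n, (mockPsi1Term n).coeff k := by
  ext k
  rw [PowerSeries.coeff_mk, tsum_coeff_of_X_pow_dvd X_pow_dvd_mockPsi1Term k.lt_add_one]
  exact PowerSeries.coeff_mk _ _

theorem mockPsi0_eq_X_mul_mk_tsum :
    mockPsi0 =
      PowerSeries.X * PowerSeries.mk fun k => ∑' n, (X ^ n * mockPsi1Term n).coeff k := by
  ext (_ | k)
  · simp [mockPsi0]
  · rw [PowerSeries.coeff_succ_X_mul, mockPsi0, PowerSeries.coeff_mk, PowerSeries.coeff_mk,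
      tsum_coeff_of_X_pow_dvd (fun n => Dvd.intro _ rfl) (by omega : k < k + 1 + 1)]
    refine sum_congr rfl fun n _ => ?_
    rw [← coeff_X_mul _ k, mockPsi1Term, succ_mul_succ_div_two]
    congr 1
    ring

theorem mult_one_three_odd_one {DT : ℤ → ℤ → ℤ → ℤ[X]} {M : ℤ → ℤ → ℤ → ℤ → ℤ[X]}
    (hM : IsMultTower DT M) (h₁ : IsDemazureFlagMult 1 (DT 1)) (h₂ : IsDemazureFlagMult 2 (DT 2))
    (a : ℕ) : M 1 3 (2 * a + 1) 1 = mockPsi1Term a := by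
  calc M 1 3 (2 * a + 1) 1
      = ∑ p ∈ Icc 1 (2 * (a : ℤ) + 1), DT 1 (2 * a + 1) p * DT 2 p 1 :=
        hM.mult_add_two 1 _ one_pos.le
    _ = ∑ b ∈ range (a + 1), DT 1 (2 * a + 1) (2 * b + 1) * DT 2 (2 * b + 1) 1 :=
        sum_Icc_one_eq_sum_odd (fun p hp => by
          rw [h₁.eq_zero_of_not_even_sub (by grind), zero_mul]) a
    _ = oddRowPoly (DT 1) 1 a := by
        simp only [oddRowPoly, h₂.level_two_apply_odd_one, one_pow, mul_one]
    _ = mockPsi1Term a := h₁.oddRowPoly_eq_prod 1 a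

/-- **Theorem (`A^{1→3}_1(1,q) = ψ₁(q)` and `A^{1→3}_1(q,q) = ψ₀(q)/q`).**
In `ℤ[[q]]`: (a) `Σ_{n≥0} M_{1,3}(2n+1,1)(q) = ψ₁(q)`;
(b) `q·Σ_{n≥0} qⁿ·M_{1,3}(2n+1,1)(q) = ψ₀(q)`.
Both sums converge coefficientwise (for each fixed `k` only finitely many `n` contribute). -/
theorem level1_to_level3_weight1_mock_theta
    (DT : ℤ → ℤ → ℤ → Polynomial ℤ) (M : ℤ → ℤ → ℤ → ℤ → Polynomial ℤ)
    (hDT : ∀ l : ℤ, 1 ≤ l → IsDemazureFlagMult l (DT l)) (hM : IsMultTower DT M) :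
    ((∀ k : ℕ, (Function.support fun n : ℕ => (M 1 3 (2*(n:ℤ)+1) 1).coeff k).Finite) ∧
      PowerSeries.mk (fun k => ∑' n : ℕ, (M 1 3 (2*(n:ℤ)+1) 1).coeff k) = mockPsi1) ∧
    ((∀ k : ℕ,
        (Function.support fun n : ℕ => ((X : Polynomial ℤ)^n * M 1 3 (2*(n:ℤ)+1) 1).coeff k).Finite) ∧
      PowerSeries.X *
          PowerSeries.mk (fun k => ∑' n : ℕ, ((X : Polynomial ℤ)^n * M 1 3 (2*(n:ℤ)+1) 1).coeff k)
        = mockPsi0) := by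
  simp only [mult_one_three_odd_one hM (hDT 1 le_rfl) (hDT 2 one_le_two)]
  exact ⟨⟨finite_support_coeff_of_X_pow_dvd X_pow_dvd_mockPsi1Term, mockPsi1_eq_mk_tsum.symm⟩,
    finite_support_coeff_of_X_pow_dvd fun n => dvd_mul_right _ _, mockPsi0_eq_X_mul_mk_tsum.symm⟩
end

section
/- For every integer k, the series Ψ_k(q) := Σ_{n≥0} q^{kn + n(n+1)/2}·(−q;q)_n defines a well-defined formal Laurent series in ℤ((q)) (for each fixed power of q only finitely many n contribute, since kn + n(n+1)/2 → ∞), and there exist Laurent polynomials a₀, a₁, b ∈ ℤ[q, q⁻¹] such that Ψ_k(q) = a₀(q)·ψ₀(q) + a₁(q)·ψ₁(q) + b(q) in ℤ((q)). -/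
open Polynomial Finset

/-- The coefficient of `q^d` (`d ∈ ℤ`) of the `n`-th term `q^{kn+n(n+1)/2}·(−q;q)_n` of
`Ψ_k(q) = Σ_{n≥0} q^{kn+n(n+1)/2}(−q;q)_n`. -/
noncomputable def PsiTermCoeff (k : ℤ) (n : ℕ) (d : ℤ) : ℤ :=
  if k*(n:ℤ) + ((n*(n+1)/2 : ℕ) : ℤ) ≤ d then
    (∏ i ∈ Finset.Icc 1 n, (1 + (X : Polynomial ℤ)^i)).coeff
      ((d - (k*(n:ℤ) + ((n*(n+1)/2 : ℕ) : ℤ))).toNat)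
  else 0

/-! Since `(−q;q)_{n+1} = (1 + q^{n+1})·(−q;q)_n`, splitting off the term `n = 0` of `Ψ_k` gives
`Ψ_k = 1 + q^{k+1} Ψ_{k+1} + q^{k+2} Ψ_{k+2}`. As `q^{k+2}` is a unit in the Laurent polynomials,
this recurrence can be run in both directions from `Ψ_0 = ψ₁` and `q Ψ_1 = ψ₀`. -/

section

open HahnSeries Filter

theorem hsum_eq_zero_add {Γ R : Type*} [PartialOrder Γ] [AddCommMonoid R]
    {s t : SummableFamily Γ R ℕ} (h : ∀ n, s (n + 1) = t n) : s.hsum = s 0 + t.hsum := by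
  have hs : s = .single 0 (s 0) + t.embDomain ⟨Nat.succ, Nat.succ_injective⟩ := by
    ext1 n
    cases n <;> simp [SummableFamily.embDomain_apply, h]
  nth_rw 1 [hs]
  rw [SummableFamily.hsum_add, SummableFamily.hsum_single, SummableFamily.hsum_embDomain]

/-- A family of Hahn series is summable if its supports move off to `+∞`: the support of `s a`
lies in `[e a, ∞)` for exponents `e a` that tend to `+∞` along the cofinite filter. -/
def summableFamilyOfTendsto {Γ α R : Type*} [LinearOrder Γ] [LocallyFiniteOrder Γ] [Nonempty Γ]
    [NoMaxOrder Γ] [AddCommMonoid R] (s : α → HahnSeries Γ R) (e : α → Γ)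
    (he : Tendsto e cofinite atTop) (hs : ∀ a, (s a).support ⊆ Set.Ici (e a)) :
    SummableFamily Γ R α where
  toFun := s
  isPWO_iUnion_support' := by
    obtain ⟨c, hc⟩ := he.isBoundedUnder_ge_atTop.bddBelow_range_of_cofinite
    have hbdd : BddBelow (⋃ a, (s a).support) :=
      ⟨c, Set.iUnion_subset fun a _ hd => (hc ⟨a, rfl⟩).trans (hs a hd)⟩
    exact hbdd.isWF.isPWO
  finite_co_support' d := by
    have hd : {a | ¬d < e a}.Finite := he.eventually_gt_atTop d
    exact hd.subset fun a ha => not_lt.2 (hs a ha)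

theorem ofPowerSeries_mk_sum_coeff_eq_hsum {R : Type*} [Semiring R] {p : ℕ → R[X]}
    {s : SummableFamily ℤ R ℕ} (hs : ∀ n, s n = ofPowerSeries ℤ R (p n)) (hp : ∀ n, X ^ n ∣ p n) :
    ofPowerSeries ℤ R (PowerSeries.mk fun d => ∑ n ∈ range (d + 1), (p n).coeff d) = s.hsum := by
  ext d
  simp only [SummableFamily.coeff_hsum, hs, PowerSeries.coeff_coe, PowerSeries.coeff_mk,
    Polynomial.coeff_coe]
  split_ifs
  · exact finsum_zero.symm
  · refine (finsum_eq_sum_of_support_subset _ fun n hn => ?_).symm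
    by_contra hlt
    exact hn (X_pow_dvd_iff.1 (hp n) _ (by simpa [Nat.lt_succ_iff] using hlt))

/-- The ring of finitely supported Hahn series; inside `R⸨X⸩` it is the ring of Laurent
polynomials. -/
def finiteSupportSubring (Γ R : Type*) [AddCommMonoid Γ] [PartialOrder Γ]
    [IsOrderedCancelAddMonoid Γ] [Ring R] : Subring (HahnSeries Γ R) where
  carrier := {f | f.support.Finite}
  mul_mem' ha hb := (ha.add hb).subset support_mul_subset
  one_mem' := (Set.finite_singleton 0).subset support_single_subset
  add_mem' ha hb := (ha.union hb).subset (support_add_subset _ _)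
  zero_mem' := by simp
  neg_mem' ha := by simpa using ha

theorem single_mem_finiteSupportSubring {Γ R : Type*} [AddCommMonoid Γ] [PartialOrder Γ]
    [IsOrderedCancelAddMonoid Γ] [Ring R] (g : Γ) (r : R) :
    single g r ∈ finiteSupportSubring Γ R :=
  (Set.finite_singleton g).subset support_single_subset

theorem single_one_mul_mem_iff {Γ R : Type*} [AddCommGroup Γ] [PartialOrder Γ]
    [IsOrderedAddMonoid Γ] [Ring R] {N : Submodule (finiteSupportSubring Γ R) (HahnSeries Γ R)}
    (g : Γ) {f : HahnSeries Γ R} : single g 1 * f ∈ N ↔ f ∈ N := by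
  have mul_mem (g : Γ) {f : HahnSeries Γ R} (hf : f ∈ N) : single g 1 * f ∈ N :=
    N.smul_mem ⟨single g 1, single_mem_finiteSupportSubring g 1⟩ hf
  refine ⟨fun hf => ?_, mul_mem g⟩
  simpa [← mul_assoc, single_mul_single] using mul_mem (-g) hf

theorem int_two_step_induction {P : ℤ → Prop} (zero : P 0) (one : P 1)
    (up : ∀ k, P k → P (k + 1) → P (k + 2)) (down : ∀ k, P (k + 1) → P (k + 2) → P k) (k : ℤ) :
    P k := by
  suffices h : P k ∧ P (k + 1) from h.1
  induction k with
  | zero => exact ⟨zero, one⟩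
  | succ i ih => exact ⟨ih.2, by simpa [add_assoc] using up _ ih.1 ih.2⟩
  | pred i ih =>
    have h : P (-(i : ℤ) - 1 + 1) := by simpa using ih.1
    exact ⟨down _ h (by convert ih.2 using 1; ring), h⟩

theorem le_triangle (n : ℕ) : n ≤ n * (n + 1) / 2 := by
  rw [Nat.le_div_iff_mul_le two_pos]
  cases n <;> nlinarith

/-- The `q`-Pochhammer symbol `(−q;q)_n` as a polynomial in `q = X`. -/
noncomputable def negQPochhammer (n : ℕ) : ℤ[X] := ∏ i ∈ Icc 1 n, (1 + X ^ i)

theorem ofPowerSeries_negQPochhammer_succ (n : ℕ) :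
    ofPowerSeries ℤ ℤ (negQPochhammer (n + 1)) =
      (1 + single ((n + 1 : ℕ) : ℤ) 1) * ofPowerSeries ℤ ℤ (negQPochhammer n) := by
  rw [negQPochhammer, prod_Icc_succ_top (Nat.le_add_left 1 n), mul_comm, ← negQPochhammer]
  simp [ofPowerSeries_X_pow]

/-- The exponent `kn + n(n+1)/2` of the lowest power of `q` in the `n`-th term of `Ψ_k`. The
division is exact and takes place in `ℕ`, as in `PsiTermCoeff`. -/
def psiExponent (k : ℤ) (n : ℕ) : ℤ := k * n + (n * (n + 1) / 2 : ℕ)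

theorem two_mul_psiExponent (k : ℤ) (n : ℕ) : 2 * psiExponent k n = n * (n + 1 + 2 * k) := by
  have h : 2 * (n * (n + 1) / 2 : ℕ) = (n : ℤ) * (n + 1) := by
    exact_mod_cast Nat.two_mul_div_two_of_even (Nat.even_mul_succ_self n)
  rw [psiExponent, mul_add, h]
  ring

theorem psiExponent_succ (k : ℤ) (n : ℕ) :
    psiExponent k (n + 1) = k + 1 + psiExponent (k + 1) n := by
  have h := two_mul_psiExponent k (n + 1)
  have h' := two_mul_psiExponent (k + 1) n
  push_cast at h
  linarith

theorem psiExponent_succ_add (k : ℤ) (n : ℕ) :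
    psiExponent k (n + 1) + (n + 1 : ℕ) = k + 2 + psiExponent (k + 2) n := by
  have h := two_mul_psiExponent k (n + 1)
  have h' := two_mul_psiExponent (k + 2) n
  push_cast at h ⊢
  linarith

theorem sub_sq_le_psiExponent (k : ℤ) (n : ℕ) : n - k ^ 2 ≤ psiExponent k n := by
  have h := two_mul_psiExponent k n
  have hle : (n : ℤ) + k ≤ (n + k) ^ 2 := Int.le_self_sq _
  have hle' : -k ≤ (-k) ^ 2 := Int.le_self_sq _
  linarith

theorem tendsto_psiExponent (k : ℤ) : Tendsto (psiExponent k) cofinite atTop := by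
  rw [Nat.cofinite_eq_atTop]
  exact tendsto_atTop_mono (sub_sq_le_psiExponent k)
    (tendsto_atTop_add_const_right _ _ tendsto_natCast_atTop_atTop)

/-- The `n`-th term `q^{kn+n(n+1)/2}·(−q;q)_n` of `Ψ_k` as a Laurent series. -/
noncomputable def psiTerm (k : ℤ) (n : ℕ) : LaurentSeries ℤ :=
  single (psiExponent k n) 1 * ofPowerSeries ℤ ℤ (negQPochhammer n)

theorem coeff_psiTerm (k : ℤ) (n : ℕ) (d : ℤ) : (psiTerm k n).coeff d = PsiTermCoeff k n d := by
  simp only [psiTerm, coeff_single_mul, one_mul, PowerSeries.coeff_coe, Polynomial.coeff_coe,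
    PsiTermCoeff, psiExponent, negQPochhammer]
  split_ifs with hneg hle hle
  · omega
  · rfl
  · congr 1
    omega
  · omega

theorem support_psiTerm_subset (k : ℤ) (n : ℕ) :
    (psiTerm k n).support ⊆ Set.Ici (psiExponent k n) := by
  intro d hd
  rw [mem_support, coeff_psiTerm] at hd
  by_contra hlt
  exact hd (if_neg hlt)

theorem psiTerm_zero (k : ℤ) : psiTerm k 0 = 1 := by
  simp [psiTerm, psiExponent, negQPochhammer]

theorem psiTerm_succ (k : ℤ) (n : ℕ) :
    psiTerm k (n + 1) =
      single (k + 1) 1 * psiTerm (k + 1) n + single (k + 2) 1 * psiTerm (k + 2) n := by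
  let e := psiExponent k (n + 1)
  let P := ofPowerSeries ℤ ℤ (negQPochhammer n)
  calc
    psiTerm k (n + 1) = single e 1 * ((1 + single ((n + 1 : ℕ) : ℤ) 1) * P) := by
      rw [psiTerm, ofPowerSeries_negQPochhammer_succ]
    _ = single e 1 * P + single (e + (n + 1 : ℕ)) 1 * P := by
      rw [add_mul, one_mul, mul_add, ← mul_assoc, single_mul_single, mul_one]
    _ = single (k + 1 + psiExponent (k + 1) n) 1 * P +
        single (k + 2 + psiExponent (k + 2) n) 1 * P := by
      rw [psiExponent_succ_add, ← psiExponent_succ]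
    _ = single (k + 1) 1 * psiTerm (k + 1) n + single (k + 2) 1 * psiTerm (k + 2) n := by
      simp only [psiTerm, ← mul_assoc, single_mul_single, mul_one, P]

/-- The series `Ψ_k` before summation: its terms as a summable family of Laurent series. -/
noncomputable def psiFamily (k : ℤ) : SummableFamily ℤ ℤ ℕ :=
  summableFamilyOfTendsto (psiTerm k) (psiExponent k) (tendsto_psiExponent k)
    (support_psiTerm_subset k)

@[simp]
theorem psiFamily_apply (k : ℤ) (n : ℕ) : psiFamily k n = psiTerm k n := rfl

theorem finite_support_psiTermCoeff (k d : ℤ) :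
    (Function.support fun n : ℕ => PsiTermCoeff k n d).Finite := by
  simp only [← coeff_psiTerm]
  exact (psiFamily k).finite_co_support d

/-- The Laurent series `Ψ_k(q) = Σ_{n≥0} q^{kn+n(n+1)/2}(−q;q)_n`, as a sum of Hahn series. -/
noncomputable def psiSeries (k : ℤ) : LaurentSeries ℤ := (psiFamily k).hsum

theorem coeff_psiSeries (k d : ℤ) : (psiSeries k).coeff d = ∑' n : ℕ, PsiTermCoeff k n d := by
  simp only [psiSeries, SummableFamily.coeff_hsum, psiFamily_apply, coeff_psiTerm]
  exact (tsum_eq_finsum (finite_support_psiTermCoeff k d)).symm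

theorem psiSeries_eq_one_add (k : ℤ) :
    psiSeries k =
      1 + (single (k + 1) 1 * psiSeries (k + 1) + single (k + 2) 1 * psiSeries (k + 2)) := by
  have hsucc (n : ℕ) : psiFamily k (n + 1) = (single (k + 1) (1 : ℤ) • psiFamily (k + 1)
      + single (k + 2) (1 : ℤ) • psiFamily (k + 2)) n := by
    -- `smul_eq_mul` would confuse `HahnModule` with `HahnSeries`.
    simp [psiTerm_succ, of_symm_smul_of_eq_mul, -smul_eq_mul]
  rw [psiSeries, hsum_eq_zero_add hsucc]
  simp only [psiFamily_apply, psiTerm_zero, SummableFamily.hsum_add, SummableFamily.hsum_smul,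
    psiSeries]

theorem psiSeries_zero : psiSeries 0 = ofPowerSeries ℤ ℤ mockPsi1 := by
  refine (ofPowerSeries_mk_sum_coeff_eq_hsum (fun n => ?_) fun n => ?_).symm
  · simp [psiTerm, psiExponent, negQPochhammer, ofPowerSeries_X_pow]
  · exact (pow_dvd_pow X (le_triangle n)).mul_right _

theorem single_one_mul_psiSeries_one :
    single 1 1 * psiSeries 1 = ofPowerSeries ℤ ℤ mockPsi0 := by
  rw [psiSeries, ← SummableFamily.hsum_smul]
  refine (ofPowerSeries_mk_sum_coeff_eq_hsum (fun n => ?_) fun n => ?_).symm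
  · have hexp : 1 + psiExponent 1 n = ((n + 1) * (n + 2) / 2 : ℕ) := by
      simpa [psiExponent, add_assoc, one_add_one_eq_two] using (psiExponent_succ 0 n).symm
    simp [of_symm_smul_of_eq_mul, -smul_eq_mul, psiTerm, negQPochhammer, ← mul_assoc,
      single_mul_single, hexp, ofPowerSeries_X_pow]
  · exact (pow_dvd_pow X (n.le_succ.trans (le_triangle (n + 1)))).mul_right _

/-- The span of `ψ₀`, `ψ₁` and `1` over the ring of Laurent polynomials, which contains
every `Ψ_k`. -/
noncomputable def mockThetaSpan : Submodule (finiteSupportSubring ℤ ℤ) (LaurentSeries ℤ) :=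
  Submodule.span _ {ofPowerSeries ℤ ℤ mockPsi0, ofPowerSeries ℤ ℤ mockPsi1, 1}

theorem psiSeries_mem_mockThetaSpan (k : ℤ) : psiSeries k ∈ mockThetaSpan := by
  have one_mem : (1 : LaurentSeries ℤ) ∈ mockThetaSpan := Submodule.subset_span (by simp)
  induction k using int_two_step_induction with
  | zero => exact psiSeries_zero ▸ Submodule.subset_span (by simp)
  | one =>
    rw [← single_one_mul_mem_iff 1, single_one_mul_psiSeries_one]
    exact Submodule.subset_span (by simp)
  | up k h h₁ =>
    rw [← single_one_mul_mem_iff (k + 1)] at h₁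
    rw [psiSeries_eq_one_add, Submodule.add_mem_iff_right _ one_mem,
      Submodule.add_mem_iff_right _ h₁] at h
    exact (single_one_mul_mem_iff (k + 2)).1 h
  | down k h₁ h₂ =>
    rw [psiSeries_eq_one_add]
    exact add_mem one_mem
      (add_mem ((single_one_mul_mem_iff _).2 h₁) ((single_one_mul_mem_iff _).2 h₂))

end

/-- **Theorem.** For every `k ∈ ℤ`, the series `Ψ_k(q) = Σ_{n≥0} q^{kn+n(n+1)/2}(−q;q)_n`
is a well-defined formal Laurent series in `ℤ((q))` (for each fixed power of `q` only
finitely many `n` contribute), and `Ψ_k = a₀·ψ₀ + a₁·ψ₁ + b` for some Laurent polynomials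
`a₀, a₁, b ∈ ℤ[q,q⁻¹]` (realized as finitely supported Laurent series). -/
theorem Psi_k_in_span_mock_theta (k : ℤ) :
    (∀ d : ℤ, (Function.support fun n : ℕ => PsiTermCoeff k n d).Finite) ∧
    ∃ F : LaurentSeries ℤ,
      (∀ d : ℤ, F.coeff d = ∑' n : ℕ, PsiTermCoeff k n d) ∧
      ∃ a₀ a₁ b : LaurentSeries ℤ,
        a₀.support.Finite ∧ a₁.support.Finite ∧ b.support.Finite ∧
        F = a₀ * (HahnSeries.ofPowerSeries ℤ ℤ mockPsi0)
          + a₁ * (HahnSeries.ofPowerSeries ℤ ℤ mockPsi1) + b := by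
  obtain ⟨a₀, a₁, b, h⟩ := Submodule.mem_span_triple.1 (psiSeries_mem_mockThetaSpan k)
  refine ⟨finite_support_psiTermCoeff k, psiSeries k, coeff_psiSeries k,
    a₀, a₁, b, a₀.2, a₁.2, b.2, ?_⟩
  simpa [Subring.smul_def] using h.symm
end
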